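/- Tensor QR decomposition for the c-product: every tensor A ∈ ℝ^{n1×n2×n3} can be factored as A = Q ⋆_c R, i.e. there exist Q ∈ ℝ^{n1×n1×n3} with mat(Q) orthogonal (mat(Q)ᵀmat(Q) = I) and R ∈ ℝ^{n1×n2×n3} with every frontal slice R^{(k)} upper triangular, such that mat(A) = mat(Q)·mat(R). -/

import Mathlib

open Matrix BigOperators Kronecker

noncomputable section

/-- The `n × n` discrete cosine transform (DCT) matrix, with 0-based indexing of the 1-based
formula `(C_n)_{ij} = √((2−δ_{i1})/n)·cos((i−1)(2j−1)π/(2n))`. -/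
def dctMatrix (n : ℕ) : Matrix (Fin n) (Fin n) ℝ :=
  Matrix.of fun i j =>
    Real.sqrt ((2 - if (i : ℕ) = 0 then 1 else 0) / n) *
      Real.cos ((i : ℝ) * (2 * (j : ℝ) + 1) * Real.pi / (2 * n))

/-- The `n × n` upshift matrix `Z`, with ones on the first superdiagonal. -/
def upshift (n : ℕ) : Matrix (Fin n) (Fin n) ℝ :=
  Matrix.of fun i j => if (i : ℕ) + 1 = (j : ℕ) then 1 else 0

/-- `W = diag(C_n(:,1))`, the diagonal matrix whose diagonal is the first column of the DCT
matrix. -/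
def Wdiag (n : ℕ) : Matrix (Fin n) (Fin n) ℝ :=
  Matrix.diagonal fun i => dctMatrix n i ⟨0, i.pos⟩

/-- The `n × n` transform matrix `M = W⁻¹ C_n (I + Z)`. -/
def transformM (n : ℕ) : Matrix (Fin n) (Fin n) ℝ :=
  (Wdiag n)⁻¹ * dctMatrix n * (1 + upshift n)

/-- The Hankel part `H_{p,q}` of the `(p,q)` block of `mat(A)` (0-based indices:
the 1-based conditions `p+q ≤ n3`, `p+q = n3+1`, `p+q ≥ n3+2` become
`p+q+1 < n3`, `p+q+1 = n3` and `p+q+1 > n3`, with blocks `A^{(p+q+1)}` resp. `0`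
resp. `A^{(2·n3−(p+q)−1)}` in 0-based numbering of the slices). -/
def hankelPart {n1 n2 n3 : ℕ} (A : Fin n3 → Matrix (Fin n1) (Fin n2) ℝ) (p q : Fin n3) :
    Matrix (Fin n1) (Fin n2) ℝ :=
  if h : p.val + q.val + 1 < n3 then A ⟨p.val + q.val + 1, h⟩
  else if h' : p.val + q.val + 1 = n3 then 0
  else A ⟨2 * n3 - (p.val + q.val) - 1, by
    have hp := p.isLt; have hq := q.isLt; omega⟩

/-- `mat(A)`: the block Toeplitz-plus-Hankel matrix associated with a third-order tensor `A`,
identified with the tuple of its frontal slices.  Rows are indexed by `Fin n3 × Fin n1`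
(block row, row within block) and columns by `Fin n3 × Fin n2`. -/
def tmat {n1 n2 n3 : ℕ} (A : Fin n3 → Matrix (Fin n1) (Fin n2) ℝ) :
    Matrix (Fin n3 × Fin n1) (Fin n3 × Fin n2) ℝ :=
  Matrix.of fun pi qj =>
    (A ⟨Nat.dist pi.1.val qj.1.val, by
        have hp := pi.1.isLt; have hq := qj.1.isLt
        simp only [Nat.dist]; omega⟩ + hankelPart A pi.1 qj.1) pi.2 qj.2

/-- The `p`-th transformed slice `Ã^{(p)} = Σ_q M_{pq} A^{(q)}` of a tensor `A`. -/
def tSlice {n1 n2 n3 : ℕ} (A : Fin n3 → Matrix (Fin n1) (Fin n2) ℝ) (p : Fin n3) :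
    Matrix (Fin n1) (Fin n2) ℝ :=
  ∑ q, transformM n3 p q • A q

/-- Toeplitz-plus-Hankel matrix `th(v)` of a vector `v ∈ ℝⁿ` (0-based indexing of the 1-based
formula of the paper). -/
def thMat {n : ℕ} (v : Fin n → ℝ) : Matrix (Fin n) (Fin n) ℝ :=
  Matrix.of fun p q =>
    v ⟨Nat.dist p.val q.val, by
        have hp := p.isLt; have hq := q.isLt; simp only [Nat.dist]; omega⟩ +
    (if h : p.val + q.val + 1 < n then v ⟨p.val + q.val + 1, h⟩
     else if h' : p.val + q.val + 1 = n then 0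
     else v ⟨2 * n - (p.val + q.val) - 1, by
       have hp := p.isLt; have hq := q.isLt; omega⟩)

/-- The product `a ⊛ B` of a tube `a ∈ ℝ^{1×1×n3}` (identified with a vector of `ℝ^{n3}`) with a
tensor `B`: the tensor whose transformed slices are `(a ⊛ B)~^{(p)} = (M a)_p • B̃^{(p)}`. -/
def tubeSMul {n1 n2 n3 : ℕ} (a : Fin n3 → ℝ) (B : Fin n3 → Matrix (Fin n1) (Fin n2) ℝ) :
    Fin n3 → Matrix (Fin n1) (Fin n2) ℝ :=
  fun t => ∑ p, (transformM n3)⁻¹ t p • ((transformM n3).mulVec a p • tSlice B p)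

/-- The c-product `a ⋆_c b` of two tubes: the tube whose transform is the componentwise product
of the transforms, `M (a ⋆_c b) = (M a) .* (M b)`. -/
def tubeCMul {n3 : ℕ} (a b : Fin n3 → ℝ) : Fin n3 → ℝ :=
  (transformM n3)⁻¹.mulVec fun p => (transformM n3).mulVec a p * (transformM n3).mulVec b p

/-- Frobenius norm of a real matrix. -/
def frobNorm {m n : ℕ} (B : Matrix (Fin m) (Fin n) ℝ) : ℝ :=
  Real.sqrt (∑ i, ∑ j, (B i j) ^ 2)

/-- Frobenius norm of a third-order tensor. -/
def tFrobNorm {n1 n2 n3 : ℕ} (A : Fin n3 → Matrix (Fin n1) (Fin n2) ℝ) : ℝ :=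
  Real.sqrt (∑ k, ∑ i, ∑ j, (A k i j) ^ 2)

/-- The `i`-th lateral slice `U(:,i,:)` of a tensor `U`: the `n1 × 1 × n3` tensor whose `k`-th
frontal slice is the `i`-th column of `U^{(k)}`. -/
def lateralSlice {n1 n2 n3 : ℕ} (U : Fin n3 → Matrix (Fin n1) (Fin n2) ℝ) (i : Fin n2) :
    Fin n3 → Matrix (Fin n1) (Fin 1) ℝ :=
  fun k => Matrix.of fun r _ => U k r i

/-- The `(i,j)` tube `S(i,j,:)` of a tensor `S`: the `1 × 1 × n3` tensor whose `k`-th frontal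
slice is the `(i,j)` entry of `S^{(k)}`. -/
def entryTube {n1 n2 n3 : ℕ} (S : Fin n3 → Matrix (Fin n1) (Fin n2) ℝ) (i : Fin n1) (j : Fin n2) :
    Fin n3 → Matrix (Fin 1) (Fin 1) ℝ :=
  fun k => Matrix.of fun _ _ => S k i j

/-- Slicewise transpose of a tensor. -/
def sTranspose {n1 n2 n3 : ℕ} (A : Fin n3 → Matrix (Fin n1) (Fin n2) ℝ) :
    Fin n3 → Matrix (Fin n2) (Fin n1) ℝ :=
  fun k => (A k)ᵀ

/-- `TVect(A)`: stacking the lateral slices of `A` one below the other; the `k`-th frontal slice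
of `TVect(A)` is obtained by stacking the columns of `A^{(k)}` (entry `r = j·n1 + i` is
`A^{(k)}_{i,j}`). -/
def tvect {n1 n2 n3 : ℕ} (A : Fin n3 → Matrix (Fin n1) (Fin n2) ℝ) :
    Fin n3 → Matrix (Fin (n1 * n2)) (Fin 1) ℝ :=
  fun k => Matrix.of fun r _ =>
    A k ⟨r.val % n1, Nat.mod_lt _ (Nat.pos_of_ne_zero fun h0 => absurd r.isLt (by simp [h0]))⟩
        ⟨r.val / n1, Nat.div_lt_of_lt_mul r.isLt⟩

/-!
The rows `c_s` of the DCT matrix are orthonormal, so the matrices `c_s c_sᵀ` are complete orthogonal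
idempotents; and each `c_s c_sᵀ` is the Toeplitz-plus-Hankel matrix of an explicit tube `w_s`. These
tubes therefore form a basis, every tensor is `A = ∑ s, w_s ⊗ B_s`, and
`mat(A) = ∑ s, (c_s c_sᵀ) ⊗ₖ B_s`. In this form products and transposes of `mat` act on the `B_s`
separately, so QR factorizations of the individual `B_s` assemble into one of `A`; triangularity
survives because the frontal slices of the factor `R` are linear combinations of the triangular
factors.
-/

lemma linearIndependent_of_orthogonalIdempotents {ι K S : Type*} [CommRing K] [IsDomain K] [Ring S]
    [Algebra K S] [Module.IsTorsionFree K S] {e : ι → S} (he : OrthogonalIdempotents e)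
    (hne : ∀ i, e i ≠ 0) : LinearIndependent K e := by
  classical
  refine linearIndependent_iff'.mpr fun t d hd i hi ↦ ?_
  have hdi : d i • e i = 0 := by
    simpa [Finset.mul_sum, he.mul_eq, hi] using congrArg (e i * ·) hd
  exact (smul_eq_zero.mp hdi).resolve_right (hne i)

section OrthogonalIdempotents

variable {ι m a b c R : Type*} [Fintype ι]

lemma sum_vecMulVec_row [NonUnitalNonAssocSemiring R] (U : Matrix ι m R) :
    ∑ s, vecMulVec (U s) (U s) = Uᵀ * U := by
  ext p q
  simp [Matrix.sum_apply, vecMulVec_apply, Matrix.mul_apply]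

lemma sum_kronecker [NonUnitalNonAssocSemiring R] (e : ι → Matrix m c R) (B : Matrix a b R) :
    (∑ s, e s) ⊗ₖ B = ∑ s, e s ⊗ₖ B := by
  ext
  simp [Matrix.sum_apply, Finset.sum_mul]

lemma completeOrthogonalIdempotents_vecMulVec_row [CommSemiring R] [Fintype m] [DecidableEq m]
    [DecidableEq ι] {U : Matrix ι m R} (hU : U * Uᵀ = 1) (hU' : Uᵀ * U = 1) :
    CompleteOrthogonalIdempotents fun s ↦ vecMulVec (U s) (U s) where
  toOrthogonalIdempotents := by
    refine OrthogonalIdempotents.iff_mul_eq.mpr fun s t ↦ ?_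
    have hst : U s ⬝ᵥ U t = (1 : Matrix ι ι R) s t := congrFun₂ hU s t
    rw [vecMulVec_mul_vecMulVec, hst, Matrix.one_apply]
    split_ifs with h <;> simp [h]
  complete := (sum_vecMulVec_row U).trans hU'

lemma sum_kronecker_mul_sum_kronecker [CommSemiring R] [Fintype m] [DecidableEq m]
    [Fintype b] {e : ι → Matrix m m R} (he : OrthogonalIdempotents e)
    (B : ι → Matrix a b R) (D : ι → Matrix b c R) :
    (∑ s, e s ⊗ₖ B s) * ∑ s, e s ⊗ₖ D s = ∑ s, e s ⊗ₖ (B s * D s) := by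
  rw [Matrix.sum_mul]
  refine Finset.sum_congr rfl fun s _ ↦ ?_
  rw [Matrix.mul_sum, Fintype.sum_eq_single s fun t hts ↦ ?_]
  · rw [← mul_kronecker_mul, (he.idem s).eq]
  · rw [← mul_kronecker_mul, he.ortho hts.symm, zero_kronecker]

end OrthogonalIdempotents

lemma exists_unitary_mul_upperTriangular {𝕜 : Type*} [RCLike 𝕜] {m n : ℕ}
    (M : Matrix (Fin m) (Fin n) 𝕜) :
    ∃ Q ∈ unitaryGroup (Fin m) 𝕜, ∃ R : Matrix (Fin m) (Fin n) 𝕜,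
      (∀ (i : Fin m) (j : Fin n), (j : ℕ) < i → R i j = 0) ∧ M = Q * R := by
  let col : Fin m → EuclideanSpace 𝕜 (Fin m) := fun j ↦
    if h : (j : ℕ) < n then WithLp.toLp 2 (M.col ⟨j, h⟩) else 0
  let b := InnerProductSpace.gramSchmidtOrthonormalBasis (𝕜 := 𝕜) finrank_euclideanSpace col
  let Q := (EuclideanSpace.basisFun (Fin m) 𝕜).toBasis.toMatrix b
  have hQ : Q ∈ unitaryGroup (Fin m) 𝕜 :=
    (EuclideanSpace.basisFun (Fin m) 𝕜).toMatrix_orthonormalBasis_mem_unitary b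
  refine ⟨Q, hQ, star Q * M, fun i j hji ↦ ?_, ?_⟩
  · have hinner : inner 𝕜 (b i) (col ⟨j, hji.trans i.isLt⟩) = 0 :=
      InnerProductSpace.gramSchmidtOrthonormalBasis_inv_triangular _ col hji
    simpa [Q, b, col, hji, PiLp.inner_apply, Matrix.mul_apply, Module.Basis.toMatrix_apply,
      mul_comm] using hinner
  · rw [← Matrix.mul_assoc, mem_unitaryGroup_iff.mp hQ, Matrix.one_mul]

lemma sum_cos_chebyshevNodes_eq_zero {n : ℕ} {k : ℤ} (hk : ¬ (2 * n : ℤ) ∣ k) :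
    ∑ q : Fin n, Real.cos (k * ((2 * (q : ℝ) + 1) / (2 * n) * Real.pi)) = 0 := by
  rcases eq_or_ne n 0 with rfl | hn
  · simp
  have hT := Polynomial.Chebyshev.sumZeroes_T_of_not_dvd hk
  rw [Polynomial.Chebyshev.sumZeroes,
    mul_eq_zero_iff_left (div_ne_zero Real.pi_ne_zero (Nat.cast_ne_zero.mpr hn))] at hT
  simpa only [Polynomial.Chebyshev.T_real_cos, Finset.sum_range] using hT

lemma sum_cos_mul_cos_chebyshevNodes {n : ℕ} (i j : Fin n) :
    ∑ q : Fin n, Real.cos ((i : ℝ) * ((2 * (q : ℝ) + 1) / (2 * n) * Real.pi)) *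
        Real.cos ((j : ℝ) * ((2 * (q : ℝ) + 1) / (2 * n) * Real.pi)) =
      if i = j then (n : ℝ) / (2 - if (i : ℕ) = 0 then 1 else 0) else 0 := by
  have hi := i.isLt
  have hj := j.isLt
  let S : ℤ → ℝ := fun k ↦ ∑ q : Fin n, Real.cos (k * ((2 * (q : ℝ) + 1) / (2 * n) * Real.pi))
  have hS_zero : S 0 = n := by simp [S]
  have hS {k : ℤ} (hk : k ≠ 0) (hlt : |k| < 2 * n) : S k = 0 :=
    sum_cos_chebyshevNodes_eq_zero fun hdvd ↦ hk (Int.eq_zero_of_abs_lt_dvd hdvd hlt)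
  have hsplit : ∑ q : Fin n, Real.cos ((i : ℝ) * ((2 * (q : ℝ) + 1) / (2 * n) * Real.pi)) *
        Real.cos ((j : ℝ) * ((2 * (q : ℝ) + 1) / (2 * n) * Real.pi)) =
      (S (i - j) + S (i + j)) / 2 := by
    simp only [S, ← Finset.sum_add_distrib, Finset.sum_div]
    refine Finset.sum_congr rfl fun q _ ↦ ?_
    push_cast
    rw [sub_mul, add_mul, ← Real.two_mul_cos_mul_cos]
    ring
  rw [hsplit]
  rcases eq_or_ne i j with rfl | hij
  · rw [if_pos rfl, sub_self, hS_zero]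
    split_ifs with h0
    · norm_num [h0, hS_zero]
    · rw [hS (by omega) (abs_lt.mpr (by omega))]
      ring
  · have hne : (i : ℕ) ≠ j := Fin.val_ne_of_ne hij
    rw [if_neg hij, hS (by omega) (abs_lt.mpr (by omega)), hS (by omega) (abs_lt.mpr (by omega))]
    simp

lemma dctMatrix_mul_transpose (n : ℕ) : dctMatrix n * (dctMatrix n)ᵀ = 1 := by
  ext i j
  let α : Fin n → ℝ := fun i ↦ 2 - if (i : ℕ) = 0 then 1 else 0
  have hα (i : Fin n) : 0 < α i := by grind
  have hn : (n : ℝ) ≠ 0 := Nat.cast_ne_zero.mpr i.pos.ne'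
  have hentry (i q : Fin n) : dctMatrix n i q =
      √(α i / n) * Real.cos (i * ((2 * (q : ℝ) + 1) / (2 * n) * Real.pi)) := by
    simp only [dctMatrix, Matrix.of_apply, α]
    ring_nf
  calc (dctMatrix n * (dctMatrix n)ᵀ) i j
      = √(α i / n) * √(α j / n) * if i = j then (n : ℝ) / α i else 0 := by
        simp only [Matrix.mul_apply, Matrix.transpose_apply, hentry, α,
          ← sum_cos_mul_cos_chebyshevNodes, Finset.mul_sum, mul_mul_mul_comm]
    _ = (1 : Matrix (Fin n) (Fin n) ℝ) i j := by
        rw [Matrix.one_apply]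
        split_ifs with hij
        · have hαj := hα j
          rw [hij, Real.mul_self_sqrt (by positivity)]
          field_simp
        · rw [mul_zero]

/-- The orthogonal projection onto the line spanned by the `s`-th row of the DCT matrix. These are
the spectral projections shared by all Toeplitz-plus-Hankel matrices `thMat v`. -/
def dctProjection (n : ℕ) (s : Fin n) : Matrix (Fin n) (Fin n) ℝ :=
  vecMulVec (dctMatrix n s) (dctMatrix n s)

lemma transpose_dctProjection {n : ℕ} (s : Fin n) : (dctProjection n s)ᵀ = dctProjection n s :=
  transpose_vecMulVec _ _

lemma completeOrthogonalIdempotents_dctProjection (n : ℕ) :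
    CompleteOrthogonalIdempotents (dctProjection n) :=
  completeOrthogonalIdempotents_vecMulVec_row (dctMatrix_mul_transpose n)
    (mul_eq_one_comm.mp (dctMatrix_mul_transpose n))

lemma dctProjection_ne_zero {n : ℕ} (s : Fin n) : dctProjection n s ≠ 0 := by
  have hnorm : dctMatrix n s ⬝ᵥ dctMatrix n s = 1 :=
    (congrFun₂ (dctMatrix_mul_transpose n) s s).trans (Matrix.one_apply_eq s)
  intro h
  have hrow : dctMatrix n s = 0 := by simpa [dctProjection] using h
  simp [hrow] at hnorm

lemma linearIndependent_dctProjection (n : ℕ) : LinearIndependent ℝ (dctProjection n) :=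
  linearIndependent_of_orthogonalIdempotents
    (completeOrthogonalIdempotents_dctProjection n).toOrthogonalIdempotents dctProjection_ne_zero

lemma dctProjection_apply {n : ℕ} (s p q : Fin n) :
    dctProjection n s p q = (2 - if (s : ℕ) = 0 then 1 else 0) / (2 * n) *
      (Real.cos (s * (p - q) * Real.pi / n) + Real.cos (s * (p + q + 1) * Real.pi / n)) := by
  have hscale : (0 : ℝ) ≤ (2 - if (s : ℕ) = 0 then 1 else 0) / n :=
    div_nonneg (by split_ifs <;> norm_num) n.cast_nonneg
  have hsub : (s * (p - q) * Real.pi / n : ℝ) =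
      s * (2 * p + 1) * Real.pi / (2 * n) - s * (2 * q + 1) * Real.pi / (2 * n) := by ring
  have hadd : (s * (p + q + 1) * Real.pi / n : ℝ) =
      s * (2 * p + 1) * Real.pi / (2 * n) + s * (2 * q + 1) * Real.pi / (2 * n) := by ring
  rw [hsub, hadd, ← Real.two_mul_cos_mul_cos]
  simp only [dctProjection, vecMulVec_apply, dctMatrix, Matrix.of_apply]
  rw [mul_mul_mul_comm, Real.mul_self_sqrt hscale]
  ring

lemma thMat_apply_of_reflection {n : ℕ} {g : ℕ → ℝ} (hn : g n = 0)
    (hg : ∀ k, n < k → k ≤ 2 * n → g (2 * n - k) = g k) (p q : Fin n) :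
    thMat (fun k ↦ g k) p q = g (Nat.dist p q) + g (p + q + 1) := by
  have hp := p.isLt
  have hq := q.isLt
  simp only [thMat, Matrix.of_apply]
  congr 1
  split_ifs with hlt heq
  · rfl
  · rw [heq, hn]
  · rw [← hg (p + q + 1) (by omega) (by omega), Nat.sub_sub]

lemma thMat_zero (n : ℕ) : thMat (0 : Fin n → ℝ) = 0 := by
  ext
  simp [thMat]

lemma thMat_sum_smul {ι : Type*} [Fintype ι] {n : ℕ} (d : ι → ℝ) (w : ι → Fin n → ℝ) :
    thMat (∑ s, d s • w s) = ∑ s, d s • thMat (w s) := by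
  ext p q
  simp only [Matrix.sum_apply, Matrix.smul_apply, thMat, Matrix.of_apply, smul_eq_mul, mul_add,
    Finset.sum_add_distrib, Finset.sum_apply, Pi.smul_apply]
  congr 1
  split_ifs <;> simp

lemma tmat_apply {n1 n2 n3 : ℕ} (A : Fin n3 → Matrix (Fin n1) (Fin n2) ℝ) (p q : Fin n3)
    (i : Fin n1) (j : Fin n2) : tmat A (p, i) (q, j) = thMat (fun k ↦ A k i j) p q := by
  simp only [tmat, thMat, hankelPart, Matrix.of_apply, Matrix.add_apply]
  congr 1
  split_ifs <;> rfl

lemma tmat_sum_smul {ι : Type*} [Fintype ι] {n1 n2 n3 : ℕ} (w : ι → Fin n3 → ℝ)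
    (B : ι → Matrix (Fin n1) (Fin n2) ℝ) :
    tmat (fun k ↦ ∑ s, w s k • B s) = ∑ s, thMat (w s) ⊗ₖ B s := by
  ext ⟨p, i⟩ ⟨q, j⟩
  have htube : (fun k ↦ (∑ s, w s k • B s) i j) = ∑ s, B s i j • w s := by
    ext k
    simp [Matrix.sum_apply, mul_comm]
  rw [tmat_apply, htube, thMat_sum_smul]
  simp [Matrix.sum_apply, mul_comm]

/-- The tube whose Toeplitz-plus-Hankel matrix is `dctProjection n s`. The alternating term makes
the coefficient at `k = n` vanish, as `thMat` requires, and it cancels between the Toeplitz and the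
Hankel part because `p - q` and `p + q + 1` have opposite parity. The index `k` ranges over `ℕ` so
that both symmetries of the coefficients can be expressed. -/
def dctTube (n s k : ℕ) : ℝ :=
  (2 - if s = 0 then 1 else 0) / (2 * n) * (Real.cos (s * k * Real.pi / n) - (-1) ^ (s + n + k))

lemma dctTube_self {n : ℕ} (hn : n ≠ 0) (s : ℕ) : dctTube n s n = 0 := by
  have hn' : (n : ℝ) ≠ 0 := Nat.cast_ne_zero.mpr hn
  have hangle : (s * n * Real.pi / n : ℝ) = s * Real.pi := by field_simp
  rw [dctTube, hangle, Real.cos_nat_mul_pi, add_assoc, pow_add, Even.neg_one_pow ⟨n, rfl⟩]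
  simp

lemma dctTube_two_mul_sub {n k : ℕ} (hn : n ≠ 0) (hk : k ≤ 2 * n) (s : ℕ) :
    dctTube n s (2 * n - k) = dctTube n s k := by
  have hn' : (n : ℝ) ≠ 0 := Nat.cast_ne_zero.mpr hn
  have hangle : (s * (2 * n - k : ℕ) * Real.pi / n : ℝ) =
      s * (2 * Real.pi) - s * k * Real.pi / n := by
    rw [Nat.cast_sub hk]
    push_cast
    field_simp
  have hparity : (-1 : ℝ) ^ (s + n + (2 * n - k)) = (-1) ^ (s + n + k) :=
    neg_one_pow_congr (by grind)
  rw [dctTube, dctTube, hangle, Real.cos_nat_mul_two_pi_sub, hparity]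

lemma dctTube_dist_add_dctTube (n s p q : ℕ) :
    dctTube n s (Nat.dist p q) + dctTube n s (p + q + 1) =
      (2 - if s = 0 then 1 else 0) / (2 * n) *
        (Real.cos (s * (p - q) * Real.pi / n) + Real.cos (s * (p + q + 1) * Real.pi / n)) := by
  have hcos : Real.cos (s * Nat.dist p q * Real.pi / n) = Real.cos (s * (p - q) * Real.pi / n) := by
    rcases le_total p q with h | h
    · rw [Nat.dist_eq_sub_of_le h, Nat.cast_sub h, ← Real.cos_neg]
      ring_nf
    · rw [Nat.dist_eq_sub_of_le_right h, Nat.cast_sub h]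
  have hparity : (-1 : ℝ) ^ (s + n + Nat.dist p q) + (-1) ^ (s + n + (p + q + 1)) = 0 := by
    have hdist : (-1 : ℝ) ^ (s + n + Nat.dist p q) = (-1) ^ (s + n + (p + q)) :=
      neg_one_pow_congr (by grind [Nat.dist])
    rw [hdist]
    ring
  rw [dctTube, dctTube, hcos]
  push_cast
  linear_combination -((2 - if s = 0 then 1 else 0) / (2 * n) : ℝ) * hparity

lemma thMat_dctTube {n : ℕ} (s : Fin n) :
    thMat (fun k : Fin n ↦ dctTube n s k) = dctProjection n s := by
  ext p q
  rw [thMat_apply_of_reflection (dctTube_self s.pos.ne' s)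
    (fun k _ hk ↦ dctTube_two_mul_sub s.pos.ne' hk s), dctTube_dist_add_dctTube,
    dctProjection_apply]

lemma linearIndependent_dctTube (n : ℕ) :
    LinearIndependent ℝ fun (s : Fin n) (k : Fin n) ↦ dctTube n s k := by
  refine Fintype.linearIndependent_iff.mpr fun d hd ↦ ?_
  have hproj : ∑ s, d s • dctProjection n s = 0 := by
    simp only [← thMat_dctTube, ← thMat_sum_smul, hd, thMat_zero]
  exact Fintype.linearIndependent_iff.mp (linearIndependent_dctProjection n) d hproj

/-- The tensor `∑ s, w_s ⊗ B_s`, where `w_s` is the tube `dctTube n3 s`; that is, the tensor whose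
transformed slices `tSlice` are the `B_s`. The c-product acts on the `B_s` separately. -/
def dctSynthesis {n1 n2 n3 : ℕ} (B : Fin n3 → Matrix (Fin n1) (Fin n2) ℝ) :
    Fin n3 → Matrix (Fin n1) (Fin n2) ℝ :=
  fun k ↦ ∑ s : Fin n3, dctTube n3 s k • B s

section Synthesis

variable {n1 n2 n3 n4 : ℕ}

lemma dctSynthesis_surjective :
    Function.Surjective (dctSynthesis (n1 := n1) (n2 := n2) (n3 := n3)) := by
  intro A
  have hspan := (linearIndependent_dctTube n3).span_eq_top_of_card_eq_finrank' (by simp)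
  have htube (v : Fin n3 → ℝ) :
      ∃ d : Fin n3 → ℝ, ∑ s, d s • (fun k : Fin n3 ↦ dctTube n3 s k) = v :=
    (Submodule.mem_span_range_iff_exists_fun ℝ).mp (hspan ▸ Submodule.mem_top)
  choose d hd using fun i j ↦ htube fun k ↦ A k i j
  refine ⟨fun s ↦ Matrix.of fun i j ↦ d i j s, ?_⟩
  ext k i j
  simpa [dctSynthesis, Matrix.sum_apply, mul_comm] using congrFun (hd i j) k

lemma tmat_dctSynthesis (B : Fin n3 → Matrix (Fin n1) (Fin n2) ℝ) :
    tmat (dctSynthesis B) = ∑ s, dctProjection n3 s ⊗ₖ B s := by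
  simp only [← thMat_dctTube]
  exact tmat_sum_smul _ B

lemma tmat_dctSynthesis_mul (B : Fin n3 → Matrix (Fin n1) (Fin n2) ℝ)
    (D : Fin n3 → Matrix (Fin n2) (Fin n4) ℝ) :
    tmat (dctSynthesis B) * tmat (dctSynthesis D) = tmat (dctSynthesis fun s ↦ B s * D s) := by
  simp only [tmat_dctSynthesis, sum_kronecker_mul_sum_kronecker
    (completeOrthogonalIdempotents_dctProjection n3).toOrthogonalIdempotents]

lemma transpose_tmat_dctSynthesis (B : Fin n3 → Matrix (Fin n1) (Fin n2) ℝ) :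
    (tmat (dctSynthesis B))ᵀ = tmat (dctSynthesis fun s ↦ (B s)ᵀ) := by
  simp only [tmat_dctSynthesis, transpose_sum, ← kroneckerMap_transpose, transpose_dctProjection]

lemma tmat_dctSynthesis_one :
    tmat (dctSynthesis fun _ ↦ (1 : Matrix (Fin n1) (Fin n1) ℝ)) =
      (1 : Matrix (Fin n3 × Fin n1) (Fin n3 × Fin n1) ℝ) := by
  rw [tmat_dctSynthesis, ← sum_kronecker,
    (completeOrthogonalIdempotents_dctProjection n3).complete, one_kronecker_one]

end Synthesis

/-- tensor QR for the c-product: every `A ∈ ℝ^{n1×n2×n3}` factors as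
`A = Q ⋆_c R` with `mat(Q)` orthogonal and every frontal slice of `R` upper triangular. -/
theorem c_qr {n1 n2 n3 : ℕ} (A : Fin n3 → Matrix (Fin n1) (Fin n2) ℝ) :
    ∃ (Q : Fin n3 → Matrix (Fin n1) (Fin n1) ℝ)
      (R : Fin n3 → Matrix (Fin n1) (Fin n2) ℝ),
      (tmat Q)ᵀ * tmat Q = 1 ∧
      (∀ k, ∀ (i : Fin n1) (j : Fin n2), (j : ℕ) < (i : ℕ) → R k i j = 0) ∧
      tmat A = tmat Q * tmat R := by
  obtain ⟨B, rfl⟩ := dctSynthesis_surjective A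
  choose Q hQ R hR hB using fun s ↦ exists_unitary_mul_upperTriangular (B s)
  have hQQ (s : Fin n3) : (Q s)ᵀ * Q s = 1 := mem_unitaryGroup_iff'.mp (hQ s)
  refine ⟨dctSynthesis Q, dctSynthesis R, ?_, fun k i j hji ↦ ?_, ?_⟩
  · simp only [transpose_tmat_dctSynthesis, tmat_dctSynthesis_mul, hQQ, tmat_dctSynthesis_one]
  · simp [dctSynthesis, Matrix.sum_apply, hR _ i j hji]
  · rw [tmat_dctSynthesis_mul, ← funext hB]

end
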